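/- Let p : ℝ^d → ℝ be a three times continuously differentiable probability density function and let x₀ ∈ ℝ^d with p(x₀) ≠ 0. Then the reciprocal of the local mass satisfies 1/Z_δ(x₀) = δ^{−d} · (Γ(1 + d/2)/π^{d/2}) · ( 1/p(x₀) − δ² · trace(H(x₀)) / (2(d+2) p(x₀)²) ) + o(δ^{3−d}) as δ → 0⁺, where H(x₀) is the Hessian matrix of p at x₀ and Γ is the Gamma function. -/

import Mathlib

/-!
The local mass is invariant under the reflection `h ↦ -h` of the ball, so
`2 Z_δ = ∫_{B_δ(0)} (p (x₀ + h) + p (x₀ - h)) dh`. The symmetrised integrand has no odd Taylor terms,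
hence equals `2 p(x₀) + D²p(x₀)(h, h) + o(‖h‖³)` (`symm_taylor_isLittleO`). This is where `C³` is
used.

The quadratic term is integrated using the symmetries of the ball: flipping one coordinate kills the
mixed moments `∫ hᵢ hⱼ`, and swapping two coordinates shows that all `∫ hᵢ²` are equal, so each is
`1/d` times `∫ ‖h‖²`, which polar coordinates evaluate. Only the trace of the Hessian survives
(`integral_bilin_ball`), and with `V` the volume of the unit ball
`Z_δ = δ^d (V (p(x₀) + δ² tr H / (2 (d + 2))) + o(δ³))` (`integral_ball_expansion`).

Finally, `V (q + δ² a)` and `V⁻¹ (1/q - δ² a / q²)` have product `1 + O(δ⁴)`, which turns the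
expansion of `Z_δ / δ^d` into one of its reciprocal (`inv_expansion`).
-/

open MeasureTheory Real Filter Topology Asymptotics

/-- Second-order Taylor expansion of the even part of a `C³` function, with error `o(‖h‖³)`. The
second derivative of the error, `D²f (x + h) + D²f (x - h) - 2 D²f x`, is `o(‖h‖)` because the
first-order terms of `D²f` at `x` cancel. Two applications of the mean value inequality finish. -/
lemma symm_taylor_isLittleO {E : Type*} [NormedAddCommGroup E] [NormedSpace ℝ E]
    {f : E → ℝ} (hf : ContDiff ℝ 3 f) (x : E) :
    (fun h => f (x + h) + f (x - h) - 2 * f x - fderiv ℝ (fderiv ℝ f) x h h)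
      =o[𝓝 0] fun h => ‖h‖ ^ 3 := by
  set D := fderiv ℝ (fderiv ℝ f) x with hD
  have hf1 : ContDiff ℝ 2 (fderiv ℝ f) := hf.fderiv_right (by norm_num)
  have hf2 : ContDiff ℝ 1 (fderiv ℝ (fderiv ℝ f)) := hf1.fderiv_right (by norm_num)
  have hsymm : ∀ v w, D v w = D w v :=
    hf.contDiffAt.isSymmSndFDerivAt (by simp; norm_num)
  have hadd : ∀ h : E, HasFDerivAt (fun h => x + h) (ContinuousLinearMap.id ℝ E) h :=
    fun h => (hasFDerivAt_id h).const_add x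
  have hsub : ∀ h : E, HasFDerivAt (fun h => x - h) (-ContinuousLinearMap.id ℝ E) h :=
    fun h => (hasFDerivAt_id h).const_sub x
  have d0 : ∀ y, HasFDerivAt f (fderiv ℝ f y) y :=
    fun y => (hf.differentiable (by norm_num) y).hasFDerivAt
  have d1 : ∀ y, HasFDerivAt (fderiv ℝ f) (fderiv ℝ (fderiv ℝ f) y) y :=
    fun y => (hf1.differentiable (by norm_num) y).hasFDerivAt
  have d2 : ∀ y, HasFDerivAt (fderiv ℝ (fderiv ℝ f)) (fderiv ℝ (fderiv ℝ (fderiv ℝ f)) y) y :=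
    fun y => (hf2.differentiable (by norm_num) y).hasFDerivAt
  have o1 : (fun h => fderiv ℝ (fderiv ℝ f) (x + h) + fderiv ℝ (fderiv ℝ f) (x - h) - (2:ℝ) • D)
      =o[𝓝 0] fun h => ‖h - 0‖ ^ 1 := by
    have ha := (hasFDerivAt_iff_isLittleO_nhds_zero (𝕜 := ℝ) (E := E)
      (F := E →L[ℝ] E →L[ℝ] ℝ) (f := fderiv ℝ (fderiv ℝ f))).1 (d2 x)
    have hneg : Tendsto (fun h : E => -h) (𝓝 0) (𝓝 0) := by
      simpa using (continuous_neg (G := E)).tendsto 0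
    have hb := (ha.comp_tendsto hneg).norm_right
    simp only [Function.comp_def, norm_neg] at hb
    simp only [pow_one, sub_zero]
    refine (ha.norm_right.add hb).congr_left fun h => ?_
    rw [map_neg, ← sub_eq_add_neg x h]
    module
  have o2 : (fun h => fderiv ℝ f (x + h) - fderiv ℝ f (x - h) - (2:ℝ) • D h)
      =o[𝓝 0] fun h => ‖h - 0‖ ^ 2 := by
    have := convex_univ.isLittleO_pow_succ (x₀ := (0:E)) (n := 1) (Set.mem_univ _)
      (f := fun h => fderiv ℝ f (x + h) - fderiv ℝ f (x - h) - (2:ℝ) • D h)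
      (f' := fun h => fderiv ℝ (fderiv ℝ f) (x + h) + fderiv ℝ (fderiv ℝ f) (x - h) - (2:ℝ) • D)
      (fun h _ => ?_) (by rwa [nhdsWithin_univ])
    · rw [nhdsWithin_univ] at this
      simpa using this
    · have := (((d1 (x + h)).comp h (hadd h)).sub ((d1 (x - h)).comp h (hsub h))).sub
        (D.hasFDerivAt.const_smul (2:ℝ) (x := h))
      refine HasFDerivAt.hasFDerivWithinAt ?_
      refine this.congr_fderiv ?_
      ext v w; simp
  have := convex_univ.isLittleO_pow_succ (x₀ := (0:E)) (n := 2) (Set.mem_univ _)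
      (f := fun h => f (x + h) + f (x - h) - 2 * f x - D h h)
      (f' := fun h => fderiv ℝ f (x + h) - fderiv ℝ f (x - h) - (2:ℝ) • D h)
      (fun h _ => ?_) (by rwa [nhdsWithin_univ])
  · rw [nhdsWithin_univ] at this
    refine (this.congr_left fun h => ?_).congr_right fun h => by simp
    simp; ring
  · have := ((((d0 (x + h)).comp h (hadd h)).add ((d0 (x - h)).comp h (hsub h))).sub_const
        (2 * f x)).sub ((D.hasFDerivAt (x := h)).clm_apply (hasFDerivAt_id h))
    refine HasFDerivAt.hasFDerivWithinAt ?_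
    refine this.congr_fderiv ?_
    ext v
    simp [hsymm v h]; ring

variable {d : ℕ}

/-- Volume of a Euclidean ball in every dimension, including `d = 0`, where Lebesgue measure is a
Dirac mass. -/
lemma volume_real_ball (d : ℕ) (x : EuclideanSpace ℝ (Fin d)) {r : ℝ} (hr : 0 < r) :
    volume.real (Metric.ball x r) = r ^ d * (π ^ ((d:ℝ)/2) / Real.Gamma (1 + d / 2)) := by
  have hG : 0 < Real.Gamma (1 + (d:ℝ) / 2) := Real.Gamma_pos_of_pos (by positivity)
  rcases Nat.eq_zero_or_pos d with rfl | hd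
  · have : Metric.ball x r = {x} := by
      ext y; simp [Subsingleton.elim y x, hr]
    rw [this, measureReal_def, volume_euclideanSpace_eq_dirac]
    simp [Subsingleton.elim x 0]
  · have : Nonempty (Fin d) := ⟨⟨0, hd⟩⟩
    have hs : √π ^ d = π ^ ((d:ℝ)/2) := by
      rw [Real.sqrt_eq_rpow, ← Real.rpow_natCast, ← Real.rpow_mul pi_pos.le]; congr 1; ring
    rw [measureReal_def, EuclideanSpace.volume_ball]
    simp only [Fintype.card_fin, ENNReal.toReal_mul, ENNReal.toReal_pow]
    rw [ENNReal.toReal_ofReal hr.le, ENNReal.toReal_ofReal, hs, add_comm]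
    rw [add_comm]; positivity

lemma setIntegral_ball_comp_isometry (L : EuclideanSpace ℝ (Fin d) ≃ₗᵢ[ℝ] EuclideanSpace ℝ (Fin d))
    (g : EuclideanSpace ℝ (Fin d) → ℝ) (r : ℝ) :
    ∫ h in Metric.ball 0 r, g (L h) = ∫ h in Metric.ball 0 r, g h := by
  rw [← L.measurePreserving.setIntegral_preimage_emb
    L.toHomeomorph.measurableEmbedding g (Metric.ball 0 r)]
  simp [LinearIsometryEquiv.preimage_ball]

/-- The mixed second moments of a centred ball vanish: change the sign of the `i`-th coordinate. -/
lemma integral_coord_mul_coord_of_ne {i j : Fin d} (hij : i ≠ j) (r : ℝ) :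
    ∫ h in Metric.ball (0 : EuclideanSpace ℝ (Fin d)) r, h i * h j = 0 := by
  let L : EuclideanSpace ℝ (Fin d) ≃ₗᵢ[ℝ] EuclideanSpace ℝ (Fin d) :=
    LinearIsometryEquiv.piLpCongrRight 2
      (fun k => if k = i then LinearIsometryEquiv.neg ℝ else LinearIsometryEquiv.refl ℝ ℝ)
  have h1 := setIntegral_ball_comp_isometry L (fun h => h i * h j) r
  have h2 : ∀ h, (L h) i * (L h) j = -(h i * h j) := fun h => by
    simp [L, hij.symm]
  simp only [h2, integral_neg] at h1
  linarith

/-- All second moments of a centred ball along the axes agree: swap the coordinates `i` and `j`. -/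
lemma integral_coord_sq_eq (i j : Fin d) (r : ℝ) :
    ∫ h in Metric.ball (0 : EuclideanSpace ℝ (Fin d)) r, h i * h i =
      ∫ h in Metric.ball (0 : EuclideanSpace ℝ (Fin d)) r, h j * h j := by
  have h1 := setIntegral_ball_comp_isometry
    (LinearIsometryEquiv.piLpCongrLeft 2 ℝ ℝ (Equiv.swap i j)) (fun h => h i * h i) r
  rw [← h1]
  simp [LinearIsometryEquiv.piLpCongrLeft_apply, Equiv.piCongrLeft'_apply]

/-- Integration in polar coordinates. The volume of the unit ball stays unevaluated, as it factors
out of the whole expansion. -/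
lemma integral_norm_sq_ball (hd : 0 < d) {r : ℝ} (hr : 0 < r) :
    ∫ h in Metric.ball (0 : EuclideanSpace ℝ (Fin d)) r, ‖h‖ ^ 2 =
      d * volume.real (Metric.ball (0 : EuclideanSpace ℝ (Fin d)) 1) * (r ^ (d + 2) / (d + 2)) := by
  have : Nonempty (Fin d) := ⟨⟨0, hd⟩⟩
  rw [← integral_indicator measurableSet_ball]
  have h1 : (Metric.ball (0 : EuclideanSpace ℝ (Fin d)) r).indicator (fun h => ‖h‖ ^ 2)
      = fun h => (Set.Iio r).indicator (fun y => y ^ 2) ‖h‖ := by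
    ext h; simp [Set.indicator]
  rw [h1, integral_fun_norm_addHaar volume ((Set.Iio r).indicator (fun y => y ^ 2))]
  have h2 : ∫ y in Set.Ioi (0:ℝ), y ^ (d - 1) • (Set.Iio r).indicator (fun y => y ^ 2) y
      = r ^ (d + 2) / (d + 2) := by
    have : ∀ y : ℝ, y ^ (d - 1) • (Set.Iio r).indicator (fun y => y ^ 2) y
        = (Set.Iio r).indicator (fun y => y ^ (d + 1)) y := fun y => by
      by_cases hy : y < r
      · simp [hy, ← pow_add]; congr 1; omega
      · simp [hy]
    simp only [this]
    rw [setIntegral_indicator measurableSet_Iio, Set.Ioi_inter_Iio, ← integral_Ioc_eq_integral_Ioo,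
      ← intervalIntegral.integral_of_le hr.le, integral_pow]
    push_cast
    simp; ring_nf
  rw [finrank_euclideanSpace, Fintype.card_fin, h2]
  simp [mul_assoc]

lemma integrableOn_ball_of_continuous {g : EuclideanSpace ℝ (Fin d) → ℝ} (hg : Continuous g)
    (x : EuclideanSpace ℝ (Fin d)) (r : ℝ) : IntegrableOn g (Metric.ball x r) :=
  (hg.continuousOn.integrableOn_compact (isCompact_closedBall x r)).mono_set
    Metric.ball_subset_closedBall

lemma integral_coord_sq (i : Fin d) {r : ℝ} (hr : 0 < r) :
    ∫ h in Metric.ball (0 : EuclideanSpace ℝ (Fin d)) r, h i * h i =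
      volume.real (Metric.ball (0 : EuclideanSpace ℝ (Fin d)) 1) * (r ^ (d + 2) / (d + 2)) := by
  have hd : 0 < d := i.pos
  have h1 := integral_norm_sq_ball hd hr
  have h2 : ∫ h in Metric.ball (0 : EuclideanSpace ℝ (Fin d)) r, ‖h‖ ^ 2
      = d * ∫ h in Metric.ball (0 : EuclideanSpace ℝ (Fin d)) r, h i * h i := by
    simp only [EuclideanSpace.real_norm_sq_eq]
    simp only [pow_two]
    rw [integral_finsetSum _ fun j _ => integrableOn_ball_of_continuous (by fun_prop) _ _]
    simp [fun j => integral_coord_sq_eq j i r]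
  have hd' : (d:ℝ) ≠ 0 := by positivity
  rw [h2, mul_assoc] at h1
  exact mul_left_cancel₀ hd' h1

/-- Only the diagonal of a bilinear form contributes to its integral over a centred ball, so the
integral is a multiple of the trace. -/
lemma integral_bilin_ball
    (B : EuclideanSpace ℝ (Fin d) →L[ℝ] EuclideanSpace ℝ (Fin d) →L[ℝ] ℝ) {r : ℝ} (hr : 0 < r) :
    ∫ h in Metric.ball (0 : EuclideanSpace ℝ (Fin d)) r, B h h =
      (∑ i, B (EuclideanSpace.single i 1) (EuclideanSpace.single i 1)) *
      (volume.real (Metric.ball (0 : EuclideanSpace ℝ (Fin d)) 1) * (r ^ (d + 2) / (d + 2))) := by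
  have hB : ∀ h, B h h = ∑ i, ∑ j,
      B (EuclideanSpace.single i 1) (EuclideanSpace.single j 1) * (h i * h j) := fun h => by
    have hh : h = ∑ i, h i • EuclideanSpace.single i (1:ℝ) := by
      simpa using ((EuclideanSpace.basisFun (Fin d) ℝ).sum_repr h).symm
    conv_lhs => rw [hh]
    simp only [map_sum, map_smul, FunLike.coe_sum, Finset.sum_apply,
      FunLike.coe_smul, Pi.smul_apply, smul_eq_mul, Finset.mul_sum]
    rw [Finset.sum_comm]
    exact Finset.sum_congr rfl fun i _ => Finset.sum_congr rfl fun j _ => by ring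
  rw [funext hB, integral_finsetSum _ fun i _ => integrableOn_ball_of_continuous (by fun_prop) _ _,
    Finset.sum_mul]
  refine Finset.sum_congr rfl fun i _ => ?_
  rw [integral_finsetSum _ fun j _ => integrableOn_ball_of_continuous (by fun_prop) _ _,
    Finset.sum_eq_single i]
  · rw [integral_const_mul, integral_coord_sq i hr]
  · intro j _ hj
    rw [integral_const_mul, integral_coord_mul_coord_of_ne hj.symm, mul_zero]
  · simp

lemma two_mul_integral_ball {f : EuclideanSpace ℝ (Fin d) → ℝ} (hf : Continuous f)
    (x : EuclideanSpace ℝ (Fin d)) (r : ℝ) :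
    2 * ∫ y in Metric.ball x r, f y =
      ∫ h in Metric.ball (0 : EuclideanSpace ℝ (Fin d)) r, (f (x + h) + f (x - h)) := by
  have h1 : ∫ h in Metric.ball (0 : EuclideanSpace ℝ (Fin d)) r, f (x + h) =
      ∫ y in Metric.ball x r, f y := by
    rw [← (measurePreserving_add_left volume x).setIntegral_preimage_emb
      (Homeomorph.addLeft x).measurableEmbedding f (Metric.ball x r)]
    simp
  have h2 := setIntegral_ball_comp_isometry (LinearIsometryEquiv.neg ℝ)
    (fun h => f (x + h)) r
  rw [integral_add (integrableOn_ball_of_continuous (by fun_prop) _ _)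
    (integrableOn_ball_of_continuous (by fun_prop) _ _), two_mul, h1]
  simp only [LinearIsometryEquiv.coe_neg, ← sub_eq_add_neg] at h2
  rw [h2, h1]

/-- Expansion of the local mass of a `C³` function, with error `o(r³)` relative to `r^d`. -/
lemma integral_ball_expansion {f : EuclideanSpace ℝ (Fin d) → ℝ} (hf : ContDiff ℝ 3 f)
    (x : EuclideanSpace ℝ (Fin d)) :
    (fun r => (∫ y in Metric.ball x r, f y) -
        r ^ d * (volume.real (Metric.ball (0 : EuclideanSpace ℝ (Fin d)) 1) *
          (f x + r ^ 2 * (∑ i, fderiv ℝ (fderiv ℝ f) x (EuclideanSpace.single i 1)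
            (EuclideanSpace.single i 1)) / (2 * (d + 2)))))
      =o[𝓝[>] (0:ℝ)] fun r => r ^ d * r ^ 3 := by
  set V := volume.real (Metric.ball (0 : EuclideanSpace ℝ (Fin d)) 1) with hV
  set D := fderiv ℝ (fderiv ℝ f) x with hD
  have hV0 : 0 < V :=
    ENNReal.toReal_pos (Metric.measure_ball_pos volume _ one_pos).ne' measure_ball_lt_top.ne
  have hfc : Continuous f := hf.continuous
  have hvol : ∀ r : ℝ, 0 < r →
      volume.real (Metric.ball (0 : EuclideanSpace ℝ (Fin d)) r) = r ^ d * V := fun r hr => by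
    rw [hV, volume_real_ball d _ hr, volume_real_ball d _ one_pos]; simp
  have hT := symm_taylor_isLittleO hf x
  rw [isLittleO_iff] at hT ⊢
  intro c hc
  -- The factor `2` compensates the doubling in the symmetrisation, and `V` comes from the volume
  -- of the ball over which the pointwise bound is integrated.
  obtain ⟨ε, hε, hball⟩ := Metric.eventually_nhds_iff_ball.1 (hT (c := 2 * c / V) (by positivity))
  filter_upwards [Ioo_mem_nhdsGT hε] with r hr
  have hr0 : 0 < r := hr.1
  set R : EuclideanSpace ℝ (Fin d) → ℝ :=
    fun h => f (x + h) + f (x - h) - 2 * f x - D h h with hR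
  have hRc : Continuous R := by fun_prop
  have hsplit : 2 * ∫ y in Metric.ball x r, f y =
      r ^ d * V * (2 * f x) + (∑ i, D (EuclideanSpace.single i 1) (EuclideanSpace.single i 1)) *
        (V * (r ^ (d + 2) / (d + 2))) +
      ∫ h in Metric.ball (0 : EuclideanSpace ℝ (Fin d)) r, R h := by
    rw [two_mul_integral_ball hfc, ← integral_bilin_ball D hr0, ← hvol r hr0, ← smul_eq_mul
      (volume.real _), ← setIntegral_const, ← integral_add, ← integral_add]
    · congr 1; ext h; simp only [hR]; ring
    · exact integrableOn_ball_of_continuous (g := fun h => 2 * f x + D h h) (by fun_prop) _ _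
    · exact integrableOn_ball_of_continuous hRc _ _
    · exact integrableOn_ball_of_continuous (by fun_prop) _ _
    · exact integrableOn_ball_of_continuous (g := fun h => D h h) (by fun_prop) _ _
  have hbound : ‖∫ h in Metric.ball (0 : EuclideanSpace ℝ (Fin d)) r, R h‖ ≤
      2 * c / V * r ^ 3 * (r ^ d * V) := by
    rw [← hvol r hr0]
    refine norm_setIntegral_le_of_norm_le_const measure_ball_lt_top fun h hh => ?_
    refine (hball h (Metric.ball_subset_ball hr.2.le hh)).trans ?_
    rw [norm_pow, norm_norm]
    have : ‖h‖ ≤ r := (mem_ball_zero_iff.1 hh).le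
    gcongr
  have heq : (∫ y in Metric.ball x r, f y) - r ^ d * (V * (f x + r ^ 2 *
      (∑ i, D (EuclideanSpace.single i 1) (EuclideanSpace.single i 1)) / (2 * (d + 2)))) =
      (∫ h in Metric.ball (0 : EuclideanSpace ℝ (Fin d)) r, R h) / 2 := by
    have : (d:ℝ) + 2 ≠ 0 := by positivity
    rw [eq_div_iff two_ne_zero, mul_comm, mul_sub, hsplit]
    field_simp
    ring
  rw [heq, norm_div, norm_mul, norm_pow, norm_pow, Real.norm_of_nonneg hr0.le, Real.norm_two,
    div_le_iff₀ two_pos]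
  refine hbound.trans (le_of_eq ?_)
  field_simp

/-- Passage to the reciprocal: with `A = V (q + r² a)` and `B = V⁻¹ (1/q - r² a / q²)` one has
`A B = 1 - a² r⁴ / q²`, so `W⁻¹ - B = (a² r⁴ / q² - (W - A) B) W⁻¹`. -/
lemma inv_expansion {W : ℝ → ℝ} {V q a : ℝ} (hV : V ≠ 0) (hq : q ≠ 0)
    (hW : (fun r => W r - V * (q + r ^ 2 * a)) =o[𝓝[>] (0:ℝ)] fun r => r ^ 3) :
    (fun r => (W r)⁻¹ - V⁻¹ * (1 / q - r ^ 2 * a / q ^ 2)) =o[𝓝[>] (0:ℝ)] fun r => r ^ 3 := by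
  have t3 : Tendsto (fun r : ℝ => r ^ 3) (𝓝[>] 0) (𝓝 0) := by
    have : Continuous fun r : ℝ => r ^ 3 := by fun_prop
    simpa using (this.tendsto 0).mono_left nhdsWithin_le_nhds
  have tA : Tendsto (fun r : ℝ => V * (q + r ^ 2 * a)) (𝓝[>] 0) (𝓝 (V * q)) := by
    have : Continuous fun r : ℝ => V * (q + r ^ 2 * a) := by fun_prop
    simpa using (this.tendsto 0).mono_left nhdsWithin_le_nhds
  have tB : Tendsto (fun r : ℝ => V⁻¹ * (1 / q - r ^ 2 * a / q ^ 2)) (𝓝[>] 0)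
      (𝓝 (V⁻¹ * (1 / q))) := by
    have : Continuous fun r : ℝ => V⁻¹ * (1 / q - r ^ 2 * a / q ^ 2) := by fun_prop
    simpa using (this.tendsto 0).mono_left nhdsWithin_le_nhds
  have tW : Tendsto W (𝓝[>] 0) (𝓝 (V * q)) := by
    simpa using (hW.trans_tendsto t3).add tA
  have hVq : V * q ≠ 0 := mul_ne_zero hV hq
  have o4 : (fun r : ℝ => a ^ 2 / q ^ 2 * r ^ 4) =o[𝓝[>] (0:ℝ)] fun r => r ^ 3 :=
    ((isLittleO_pow_pow (by norm_num : 3 < 4)).mono nhdsWithin_le_nhds).const_mul_left _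
  have oB : (fun r => (W r - V * (q + r ^ 2 * a)) * (V⁻¹ * (1 / q - r ^ 2 * a / q ^ 2)))
      =o[𝓝[>] (0:ℝ)] fun r => r ^ 3 := by
    simpa using hW.mul_isBigO (tB.isBigO_one ℝ)
  have oInv := (o4.sub oB).mul_isBigO ((tW.inv₀ hVq).isBigO_one ℝ)
  simp only [mul_one] at oInv
  refine oInv.congr' ?_ EventuallyEq.rfl
  filter_upwards [tW.eventually_ne hVq] with r hr
  field_simp
  ring

/-- For a three times continuously differentiable probability density `p`
on `ℝ^d` and `x₀ ∈ ℝ^d` with `p(x₀) ≠ 0`, the reciprocal of the local mass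
`Z_δ(x₀) = ∫_{B_δ(x₀)} p` satisfies
`1/Z_δ(x₀) = δ^{−d} (Γ(1+d/2)/π^{d/2}) (1/p(x₀) − δ² tr(H(x₀))/(2(d+2)p(x₀)²)) + o(δ^{3−d})`
as `δ → 0⁺`, where `H(x₀)` is the Hessian of `p` at `x₀` (its trace being the sum of the
second partial derivatives). -/
theorem local_mass_reciprocal_asymptotics
    (d : ℕ) (p : EuclideanSpace ℝ (Fin d) → ℝ)
    (hp_smooth : ContDiff ℝ 3 p)
    (hp_nonneg : ∀ x, 0 ≤ p x)
    (hp_int : ∫ x, p x = 1)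
    (x₀ : EuclideanSpace ℝ (Fin d)) (hx₀ : p x₀ ≠ 0)
    (Z : ℝ → ℝ) (hZ : ∀ δ, Z δ = ∫ x in Metric.ball x₀ δ, p x)
    (traceH : ℝ)
    (htraceH : traceH = ∑ i : Fin d,
        fderiv ℝ (fun y => fderiv ℝ p y (EuclideanSpace.single i 1)) x₀
          (EuclideanSpace.single i 1)) :
    (fun δ => (Z δ)⁻¹ - δ ^ (-(d : ℝ)) * (Real.Gamma (1 + d / 2) / π ^ ((d : ℝ) / 2)) *
        (1 / p x₀ - δ ^ 2 * traceH / (2 * (d + 2) * p x₀ ^ 2)))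
      =o[𝓝[>] (0:ℝ)] fun δ => δ ^ ((3 : ℝ) - d) := by
  have hp1 : ContDiff ℝ 2 (fderiv ℝ p) := hp_smooth.fderiv_right (by norm_num)
  have htr : traceH = ∑ i, fderiv ℝ (fderiv ℝ p) x₀ (EuclideanSpace.single i 1)
      (EuclideanSpace.single i 1) := by
    rw [htraceH]
    refine Finset.sum_congr rfl fun i _ => ?_
    rw [fderiv_clm_apply (hp1.differentiable (by norm_num) x₀) (by fun_prop)]
    simp
  have hexp := integral_ball_expansion hp_smooth x₀
  rw [← htr] at hexp
  simp only [← hZ] at hexp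
  set V := volume.real (Metric.ball (0 : EuclideanSpace ℝ (Fin d)) 1) with hV
  have hVeq : V = π ^ ((d:ℝ)/2) / Real.Gamma (1 + d / 2) := by
    rw [hV, volume_real_ball d _ one_pos]; simp
  have hG : 0 < Real.Gamma (1 + (d:ℝ) / 2) := Real.Gamma_pos_of_pos (by positivity)
  have hV0 : V ≠ 0 := by rw [hVeq]; positivity
  have hW : (fun r => Z r / r ^ d - V * (p x₀ + r ^ 2 * (traceH / (2 * (d + 2)))))
      =o[𝓝[>] (0:ℝ)] fun r => r ^ 3 := by
    refine ((isBigO_refl (fun r : ℝ => (r ^ d)⁻¹) (𝓝[>] 0)).mul_isLittleO hexp).congr' ?_ ?_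
    all_goals
      filter_upwards [self_mem_nhdsWithin] with r hr
      have hr0 : r ≠ 0 := (Set.mem_Ioi.1 hr).ne'
      field_simp
  have hinv := inv_expansion hV0 hx₀ hW
  refine ((isBigO_refl (fun r : ℝ => (r ^ d)⁻¹) (𝓝[>] 0)).mul_isLittleO hinv).congr' ?_ ?_
  all_goals
    filter_upwards [self_mem_nhdsWithin] with r hr
    have hr0 : 0 < r := hr
  · rw [Real.rpow_neg hr0.le, Real.rpow_natCast, hVeq]
    field_simp
  · rw [Real.rpow_sub hr0, Real.rpow_natCast, inv_mul_eq_div]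
    norm_cast
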